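/- arXiv:2512.08841 — 2 statements merged into one kernel-verified Lean document; each statement's English description precedes it below -/
import Mathlib

section
/- Conservation of angular momentum: suppose π̃ and P satisfy the weak momentum balance with zero boundary forcing, and suppose in addition there is a smooth flow map φ : ℝ × ℝ² → ℝ², a reference density ρ₀ : ℝ² → ℝ, and a scalar field p : ℝ × ℝ² → ℝ such that π̃(t,X) = ρ₀(X) ∂_tφ(t,X) and P(t,X) = p(t,X) · (adjugate ∇_Xφ(t,X))ᵀ (the barotropic first Piola–Kirchhoff stress P_W J F⁻ᵀ, since det F · F⁻ᵀ = (adjugate F)ᵀ). Then the total angular momentum is conserved: ∫_B ( π̃₁(T,X) φ₂(T,X) − π̃₂(T,X) φ₁(T,X) ) dX = ∫_B ( π̃₁(0,X) φ₂(0,X) − π̃₂(0,X) φ₁(0,X) ) dX. -/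
/-!
Test the weak balance with the infinitesimal rotation of the flow, `ψ = (φ₂, -φ₁)`. The boundary
terms are then the angular momenta at times `T` and `0`, and the bulk integrand vanishes pointwise:
`⟨π̃, ∂ₜψ⟩ = 0` because `π̃` is parallel to `∂ₜφ`, and `P : ∇ψ = 0` because
`P Fᵀ = p (det F) I` is symmetric, where `F = ∇φ`. Since the integrand is identically zero, no
integrability is needed.
-/

open MeasureTheory Matrix

/-- **Conservation of angular momentum.** If the momentum field `π̃` and the stress
field `P` satisfy the weak momentum balance with zero boundary forcing, and moreover
`π̃ = ρ₀ ∂ₜφ` and `P = p ⬝ (adjugate ∇ₓφ)ᵀ` (the barotropic first Piola–Kirchhoff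
stress `P_W J F⁻ᵀ`), then the total angular momentum is conserved. -/
theorem angular_momentum_conservation
    (B : Set (Fin 2 → ℝ)) (hBmeas : MeasurableSet B) (hBbdd : Bornology.IsBounded B)
    (T : ℝ) (hT : 0 < T)
    (π : ℝ → (Fin 2 → ℝ) → (Fin 2 → ℝ))
    (P : ℝ → (Fin 2 → ℝ) → Matrix (Fin 2) (Fin 2) ℝ)
    (hweak : ∀ ψ : ℝ → (Fin 2 → ℝ) → (Fin 2 → ℝ),
      ContDiff ℝ (⊤ : ℕ∞) (fun p : ℝ × (Fin 2 → ℝ) => ψ p.1 p.2) →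
      (∫ t in (0:ℝ)..T, ∫ X in B,
          ((∑ i, π t X i * deriv (fun s => ψ s X i) t)
            + ∑ i, ∑ j, P t X i j * fderiv ℝ (fun Y => ψ t Y i) X (Pi.single j 1)))
        = (∫ X in B, ∑ i, π T X i * ψ T X i) - ∫ X in B, ∑ i, π 0 X i * ψ 0 X i)
    (φ : ℝ → (Fin 2 → ℝ) → (Fin 2 → ℝ))
    (hφ : ContDiff ℝ (⊤ : ℕ∞) (fun p : ℝ × (Fin 2 → ℝ) => φ p.1 p.2))
    (ρ₀ : (Fin 2 → ℝ) → ℝ)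
    (p : ℝ → (Fin 2 → ℝ) → ℝ)
    (hπ : ∀ t X (i : Fin 2), π t X i = ρ₀ X * deriv (fun s => φ s X i) t)
    (hP : ∀ t X, P t X =
      p t X • ((Matrix.of fun i j : Fin 2 =>
        fderiv ℝ (fun Y => φ t Y i) X (Pi.single j 1)).adjugate)ᵀ) :
    (∫ X in B, (π T X 0 * φ T X 1 - π T X 1 * φ T X 0))
      = ∫ X in B, (π 0 X 0 * φ 0 X 1 - π 0 X 1 * φ 0 X 0) := by
  have hc : ∀ i : Fin 2, ContDiff ℝ (⊤ : ℕ∞) (fun q : ℝ × (Fin 2 → ℝ) => φ q.1 q.2 i) :=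
    fun i => contDiff_pi.mp hφ i
  have h := hweak (fun t X => ![φ t X 1, -φ t X 0]) (by
    refine contDiff_pi.mpr fun i => ?_
    fin_cases i
    · exact hc 1
    · exact (hc 0).neg)
  have hz : ∀ t X,
      ((∑ i, π t X i * deriv (fun s => (![φ s X 1, -φ s X 0] : Fin 2 → ℝ) i) t)
        + ∑ i, ∑ j, P t X i j *
          fderiv ℝ (fun Y => (![φ t Y 1, -φ t Y 0] : Fin 2 → ℝ) i) X (Pi.single j 1)) = 0 := by
    intro t X
    simp only [Fin.sum_univ_two, Matrix.cons_val_zero, Matrix.cons_val_one, hπ, hP,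
      Matrix.adjugate_fin_two, Matrix.smul_apply, Matrix.transpose_apply, Matrix.of_apply,
      deriv.fun_neg, fderiv_fun_neg, _root_.neg_apply, smul_eq_mul]
    ring
  simp only [hz, integral_zero, intervalIntegral.integral_zero] at h
  simp only [Fin.sum_univ_two, Matrix.cons_val_zero, Matrix.cons_val_one, mul_neg,
    ← sub_eq_add_neg] at h
  exact sub_eq_zero.mp h.symm
end

section
/- Derivative of a nodal expansion in the edge basis: for every family of coefficients c : {0,…,N} → ℝ, the polynomial identity (∑_{i=0}^{N} c_i h_i)′ = ∑_{j=1}^{N} (c_j − c_{j−1}) e_j holds; i.e. the derivative of a nodal (Lagrange) expansion is the edge expansion whose coefficients are the differences of consecutive nodal coefficients. -/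
open Polynomial

/-! The Lagrange basis polynomials sum to `1`, since this sum and `1` have degree at most `N` and
agree at `N + 1` distinct nodes; hence their derivatives sum to `0`. Summation by parts of
`∑ c i * (h i)′` against the partial sums of the `(h k)′` therefore has no boundary term, and those
partial sums are `-e j`. -/

/-- Summation by parts, with the boundary term kept explicit. -/
lemma sum_C_mul_eq_sub_sum_partial (c : ℕ → ℝ) (g : ℕ → Polynomial ℝ) (n : ℕ) :
    ∑ i ∈ Finset.range (n + 1), C (c i) * g i
      = C (c n) * ∑ i ∈ Finset.range (n + 1), g i
        - ∑ j ∈ Finset.Icc 1 n, C (c j - c (j - 1)) * ∑ k ∈ Finset.range j, g k := by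
  induction n with
  | zero => simp
  | succ n ih =>
    rw [Finset.sum_range_succ, ih, Finset.sum_Icc_succ_top (by omega),
      Finset.sum_range_succ g (n + 1), Nat.add_sub_cancel, C_sub]
    ring

lemma sum_nodal_eq_one (N : ℕ) (ξ : ℕ → ℝ)
    (hξ : ∀ i j, i < j → j ≤ N → ξ i < ξ j)
    (h : ℕ → Polynomial ℝ)
    (hdeg : ∀ i, i ≤ N → (h i).natDegree ≤ N)
    (hnodal : ∀ i j, i ≤ N → j ≤ N →
      (h i).eval (ξ j) = if i = j then (1:ℝ) else 0) :
    ∑ i ∈ Finset.range (N + 1), h i = 1 := by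
  have hinj : Set.InjOn ξ (Finset.range (N + 1) : Finset ℕ) := by
    intro i hi j hj hij
    simp only [Finset.coe_range, Set.mem_Iio] at hi hj
    rcases lt_trichotomy i j with hlt | heq | hgt
    · exact absurd hij (hξ i j hlt (by omega)).ne
    · exact heq
    · exact absurd hij (hξ j i hgt (by omega)).ne'
  have hlt : ∀ p : Polynomial ℝ, p.natDegree ≤ N → p.degree < (Finset.range (N + 1)).card := by
    intro p hp
    rw [Finset.card_range]
    exact (natDegree_le_iff_degree_le.mp hp).trans_lt (by exact_mod_cast Nat.lt_succ_self N)
  refine eq_of_degrees_lt_of_eval_index_eq _ hinj (hlt _ ?_) (hlt _ (by simp)) ?_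
  · exact natDegree_sum_le_of_forall_le _ _
      fun i hi => hdeg i (Nat.lt_succ_iff.mp (Finset.mem_range.mp hi))
  · intro j hj
    have hjN : j ≤ N := Nat.lt_succ_iff.mp (Finset.mem_range.mp hj)
    rw [eval_finsetSum, eval_one, Finset.sum_congr rfl fun i hi =>
      hnodal i j (Nat.lt_succ_iff.mp (Finset.mem_range.mp hi)) hjN]
    rw [Finset.sum_ite_eq' _ j, if_pos hj]

/-- **Derivative of a nodal expansion in the edge basis.** If `h i` are the Lagrange
basis polynomials for nodes `ξ 0 < ξ 1 < ⋯ < ξ N` and `e j := -∑_{k<j} (h k)′` are the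
edge polynomials, then for every family of coefficients `c`,
`(∑_{i=0}^N c i • h i)′ = ∑_{j=1}^N (c j - c (j-1)) • e j`. -/
theorem nodal_derivative_eq_edge_expansion
    (N : ℕ) (hN : 1 ≤ N) (ξ : ℕ → ℝ)
    (hξ : ∀ i j, i < j → j ≤ N → ξ i < ξ j)
    (h : ℕ → Polynomial ℝ)
    (hdeg : ∀ i, i ≤ N → (h i).natDegree ≤ N)
    (hnodal : ∀ i j, i ≤ N → j ≤ N →
      (h i).eval (ξ j) = if i = j then (1:ℝ) else 0)
    (e : ℕ → Polynomial ℝ)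
    (he : ∀ j, 1 ≤ j → j ≤ N →
      e j = -(∑ k ∈ Finset.range j, Polynomial.derivative (h k)))
    (c : ℕ → ℝ) :
    Polynomial.derivative (∑ i ∈ Finset.range (N + 1), Polynomial.C (c i) * h i)
      = ∑ j ∈ Finset.Icc 1 N, Polynomial.C (c j - c (j - 1)) * e j := by
  have hzero : ∑ i ∈ Finset.range (N + 1), derivative (h i) = 0 := by
    rw [← derivative_sum, sum_nodal_eq_one N ξ hξ h hdeg hnodal, derivative_one]
  simp only [derivative_sum, derivative_C_mul]
  rw [sum_C_mul_eq_sub_sum_partial c (fun i => derivative (h i)) N, hzero, mul_zero, zero_sub,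
    ← Finset.sum_neg_distrib]
  refine Finset.sum_congr rfl fun j hj => ?_
  rw [Finset.mem_Icc] at hj
  rw [he j hj.1 hj.2, mul_neg]
end
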